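/- Let n ≥ 1, let β : [0, ∞) × ℝⁿ → ℝⁿ be a bounded continuous map, and fix s ≥ 0. For k = 0, 1, 2, … let w_k : [0, ∞) → ℝⁿ be continuous and v_k : [0, ∞) → ℝ be continuous and nondecreasing, and suppose that w_k → w₀ and v_k → v₀ locally uniformly on [0, ∞) as k → ∞. Then the functions t ↦ ∫_{(s, t]} β(r, w_k(r)) dλ_{v_k}(r) converge, locally uniformly in t ∈ [s, ∞), to the function t ↦ ∫_{(s, t]} β(r, w₀(r)) dλ_{v₀}(r) as k → ∞, where λ_v denotes the Lebesgue–Stieltjes measure associated with a nondecreasing right-continuous function v. -/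

import Mathlib

open MeasureTheory Filter Topology

/-!
Fix a compact interval `[s, T]`. The limit integrand is continuous there, hence uniformly close to
a step function, and by uniform convergence of the integrands the same step function is close to
all but finitely many of them. The Stieltjes integral of a step function over `(s, t]` is a finite
combination of values of the integrator at points of `[s, T]`, so it converges uniformly in `t`
when the integrators do. The approximation errors are controlled by the total masses
`v k T - v k s`, which stay bounded.
-/

/-- The Riemann–Stieltjes sum over the cells `(x n, x (n + 1)]`, `n < N`, with value `c n` on
the `n`-th cell. The `c n` need not be values of an integrand, so this is also the Stieltjes
integral of an arbitrary step function. -/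
def stieltjesSum {α E : Type*} [AddCommMonoid E] [Module ℝ E]
    (V : α → ℝ) (x : ℕ → α) (c : ℕ → E) (N : ℕ) : E :=
  ∑ n ∈ Finset.range N, (V (x (n + 1)) - V (x n)) • c n

section Approximation

variable {E : Type*} [NormedAddCommGroup E] [NormedSpace ℝ E] [CompleteSpace E]
  (V : StieltjesFunction ℝ) {f : ℝ → E} {x : ℕ → ℝ} {c : ℕ → E} {N : ℕ} {ε : ℝ}

lemma norm_setIntegral_Ioc_sub_smul_le {a b : ℝ} {y : E} (hab : a ≤ b)
    (hf : IntegrableOn f (Set.Ioc a b) V.measure) (hfy : ∀ r ∈ Set.Ioc a b, ‖f r - y‖ ≤ ε) :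
    ‖(∫ r in Set.Ioc a b, f r ∂V.measure) - (V b - V a) • y‖ ≤ ε * (V b - V a) := by
  have hfin : V.measure (Set.Ioc a b) < ⊤ := by simp
  have hreal : V.measure.real (Set.Ioc a b) = V b - V a := by
    rw [measureReal_def, V.measure_Ioc, ENNReal.toReal_ofReal (sub_nonneg.2 (V.mono hab))]
  rw [← hreal, ← setIntegral_const, ← integral_sub hf (integrableOn_const hfin.ne)]
  exact norm_setIntegral_le_of_norm_le_const hfin hfy

lemma norm_setIntegral_Ioc_sub_stieltjesSum_le (hx : Monotone x)
    (hf : IntegrableOn f (Set.Ioc (x 0) (x N)) V.measure)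
    (hfc : ∀ n < N, ∀ r ∈ Set.Ioc (x n) (x (n + 1)), ‖f r - c n‖ ≤ ε) :
    ‖(∫ r in Set.Ioc (x 0) (x N), f r ∂V.measure) - stieltjesSum V x c N‖
      ≤ ε * (V (x N) - V (x 0)) := by
  have hcell (n : ℕ) (hn : n < N) : IntegrableOn f (Set.Ioc (x n) (x (n + 1))) V.measure :=
    hf.mono_set (Set.Ioc_subset_Ioc (hx n.zero_le) (hx hn))
  have hsplit : ∫ r in Set.Ioc (x 0) (x N), f r ∂V.measure =
      ∑ n ∈ Finset.range N, ∫ r in Set.Ioc (x n) (x (n + 1)), f r ∂V.measure := by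
    simp_rw [← intervalIntegral.integral_of_le (hx (Nat.zero_le _)),
      ← intervalIntegral.integral_of_le (hx (Nat.le_succ _))]
    exact (intervalIntegral.sum_integral_adjacent_intervals fun n hn =>
      (intervalIntegrable_iff_integrableOn_Ioc_of_le (hx n.le_succ)).2 (hcell n hn)).symm
  rw [hsplit, stieltjesSum, ← Finset.sum_sub_distrib,
    ← Finset.sum_range_sub (fun n => V (x n)), Finset.mul_sum]
  refine norm_sum_le_of_le _ fun n hn => ?_
  rw [Finset.mem_range] at hn
  exact norm_setIntegral_Ioc_sub_smul_le V (hx n.le_succ) (hcell n hn) (hfc n hn)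

lemma norm_setIntegral_Ioc_sub_stieltjesSum_min_le {t : ℝ} (hx : Monotone x)
    (ht : t ∈ Set.Icc (x 0) (x N)) (hf : IntegrableOn f (Set.Ioc (x 0) t) V.measure)
    (hfc : ∀ n < N, ∀ r ∈ Set.Ioc (x n) (x (n + 1)), ‖f r - c n‖ ≤ ε) :
    ‖(∫ r in Set.Ioc (x 0) t, f r ∂V.measure) - stieltjesSum V (fun n => min (x n) t) c N‖
      ≤ ε * (V t - V (x 0)) := by
  have hmono : Monotone fun n => min (x n) t := fun m n hmn => min_le_min_right t (hx hmn)
  have h0 : min (x 0) t = x 0 := min_eq_left ht.1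
  have hN : min (x N) t = t := min_eq_right ht.2
  have hmin := norm_setIntegral_Ioc_sub_stieltjesSum_le V (f := f) (c := c) (N := N) (ε := ε) hmono
  simp only [h0, hN] at hmin
  refine hmin hf fun n hn r ⟨hnr, hrn⟩ => ?_
  obtain ⟨hrx, hrt⟩ := le_min_iff.1 hrn
  exact hfc n hn r ⟨(min_lt_iff.1 hnr).resolve_right hrt.not_gt, hrx⟩

lemma norm_setIntegral_Ioc_sub_stieltjesSum_min_le_of_norm_sub_le {g : ℝ → E} {t δ : ℝ}
    (hx : Monotone x) (ht : t ∈ Set.Icc (x 0) (x N))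
    (hg : IntegrableOn g (Set.Ioc (x 0) t) V.measure)
    (hfc : ∀ n < N, ∀ r ∈ Set.Ioc (x n) (x (n + 1)), ‖f r - c n‖ ≤ ε)
    (hgf : ∀ r ∈ Set.Ioc (x 0) (x N), ‖g r - f r‖ ≤ δ) :
    ‖(∫ r in Set.Ioc (x 0) t, g r ∂V.measure) - stieltjesSum V (fun n => min (x n) t) c N‖
      ≤ (δ + ε) * (V t - V (x 0)) :=
  norm_setIntegral_Ioc_sub_stieltjesSum_min_le V hx ht hg fun n hn r hr =>
    (norm_sub_le_norm_sub_add_norm_sub _ (f r) _).trans <|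
      add_le_add (hgf r ⟨(hx n.zero_le).trans_lt hr.1, hr.2.trans (hx hn)⟩) (hfc n hn r hr)

end Approximation

lemma exists_partition_dist_lt_of_continuousOn {X : Type*} [PseudoMetricSpace X] {f : ℝ → X}
    {s T ε : ℝ} (hsT : s ≤ T) (hf : ContinuousOn f (Set.Icc s T)) (hε : 0 < ε) :
    ∃ (x : ℕ → ℝ) (c : ℕ → X) (N : ℕ), Monotone x ∧ x 0 = s ∧ x N = T ∧
      ∀ n, ∀ r ∈ Set.Icc (x n) (x (n + 1)), dist (f r) (c n) < ε := by
  obtain ⟨x, hx0, hxmono, ⟨N, hN⟩, hcell⟩ := exists_monotone_Icc_subset_open_cover_Icc hsT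
    (c := fun y : X => {r | dist (f r) y < ε})
    (fun _ => isOpen_lt (hf.domRestrict.dist continuous_const) continuous_const)
    (fun r _ => Set.mem_iUnion.2 ⟨f r, by simpa using hε⟩)
  choose c hc using hcell
  refine ⟨fun n => x n, c, N, hxmono, by simp [hx0], by simp [hN N le_rfl], fun n r hr => ?_⟩
  exact hc n (a := ⟨r, (x n).2.1.trans hr.1, hr.2.trans (x (n + 1)).2.2⟩) hr

section Convergence

variable {ι : Type*} {l : Filter ι}

lemma tendstoUniformlyOn_stieltjesSum {α γ E : Type*} [AddCommGroup E] [Module ℝ E]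
    [UniformSpace E] [IsUniformAddGroup E] [ContinuousSMul ℝ E]
    {V : ι → α → ℝ} {V₀ : α → ℝ} {K : Set α} {D : Set γ} {x : ℕ → γ → α}
    (hV : TendstoUniformlyOn V V₀ l K) (hx : ∀ n, Set.MapsTo (x n) D K) (c : ℕ → E) (N : ℕ) :
    TendstoUniformlyOn (fun i t => stieltjesSum (V i) (fun n => x n t) c N)
      (fun t => stieltjesSum V₀ (fun n => x n t) c N) l D := by
  have hnode (n : ℕ) : TendstoUniformlyOn (fun i t => V i (x n t)) (fun t => V₀ (x n t)) l D :=
    (hV.comp (x n)).mono (hx n)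
  have hterm (n : ℕ) : TendstoUniformlyOn (fun i t => (V i (x (n + 1) t) - V i (x n t)) • c n)
      (fun t => (V₀ (x (n + 1) t) - V₀ (x n t)) • c n) l D :=
    ((ContinuousLinearMap.id ℝ ℝ).smulRight (c n)).uniformContinuous.comp_tendstoUniformlyOn
      ((hnode (n + 1)).sub (hnode n))
  unfold stieltjesSum
  induction N with
  | zero => simpa using tendsto_const_nhds.tendstoUniformlyOn_const D
  | succ N ih => simpa only [Finset.sum_range_succ] using! ih.add (hterm N)

theorem tendstoUniformlyOn_setIntegral_Ioc {E : Type*} [NormedAddCommGroup E] [NormedSpace ℝ E]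
    [CompleteSpace E] {f : ι → ℝ → E} {f₀ : ℝ → E} {V : ι → StieltjesFunction ℝ}
    {V₀ : StieltjesFunction ℝ} {s T : ℝ} (hsT : s ≤ T) (hf₀ : ContinuousOn f₀ (Set.Icc s T))
    (hfint : ∀ᶠ i in l, IntegrableOn (f i) (Set.Ioc s T) (V i).measure)
    (hf : TendstoUniformlyOn f f₀ l (Set.Icc s T))
    (hV : TendstoUniformlyOn (fun i => (V i : ℝ → ℝ)) V₀ l (Set.Icc s T)) :
    TendstoUniformlyOn (fun i t => ∫ r in Set.Ioc s t, f i r ∂(V i).measure)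
      (fun t => ∫ r in Set.Ioc s t, f₀ r ∂V₀.measure) l (Set.Icc s T) := by
  rw [Metric.tendstoUniformlyOn_iff]
  intro ε hε
  obtain ⟨M, hM⟩ := exists_gt (V₀ T - V₀ s)
  have hM0 : 0 < M := (sub_nonneg.2 (V₀.mono hsT)).trans_lt hM
  obtain ⟨e, he, heM⟩ : ∃ e > 0, e * M = ε / 3 := ⟨ε / 3 / M, by positivity, by field_simp⟩
  obtain ⟨x, c, N, hx, rfl, rfl, hc⟩ :=
    exists_partition_dist_lt_of_continuousOn hsT hf₀ (half_pos he)
  have happrox (W : StieltjesFunction ℝ) (g : ℝ → E) (t : ℝ) (ht : t ∈ Set.Icc (x 0) (x N))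
      (hW : W (x N) - W (x 0) < M) (hg : IntegrableOn g (Set.Ioc (x 0) (x N)) W.measure)
      (hgf : ∀ r ∈ Set.Icc (x 0) (x N), dist (f₀ r) (g r) < e / 2) :
      dist (∫ r in Set.Ioc (x 0) t, g r ∂W.measure)
        (stieltjesSum W (fun n => min (x n) t) c N) ≤ ε / 3 := calc
    _ ≤ (e / 2 + e / 2) * (W t - W (x 0)) := by
      rw [dist_eq_norm]
      refine norm_setIntegral_Ioc_sub_stieltjesSum_min_le_of_norm_sub_le W hx ht
        (hg.mono_set (Set.Ioc_subset_Ioc_right ht.2)) (f := f₀)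
        (fun n _ r hr => ?_) fun r hr => ?_
      · exact dist_eq_norm (f₀ r) _ ▸ (hc n r (Set.Ioc_subset_Icc_self hr)).le
      · exact dist_eq_norm' (f₀ r) _ ▸ (hgf r (Set.Ioc_subset_Icc_self hr)).le
    _ ≤ e * M := by rw [add_halves]; gcongr; linarith [W.mono ht.2]
    _ = ε / 3 := heM
  have hsum := tendstoUniformlyOn_stieltjesSum hV (D := Set.Icc (x 0) (x N))
    (x := fun n t => min (x n) t)
    (fun n t ht => ⟨le_min (hx n.zero_le) ht.1, (min_le_right _ _).trans ht.2⟩) c N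
  have hmass : ∀ᶠ i in l, V i (x N) - V i (x 0) < M :=
    ((hV.tendsto_at (Set.right_mem_Icc.2 hsT)).sub
      (hV.tendsto_at (Set.left_mem_Icc.2 hsT))).eventually_lt_const hM
  have hf₀int : IntegrableOn f₀ (Set.Ioc (x 0) (x N)) V₀.measure :=
    hf₀.integrableOn_Icc.mono_set Set.Ioc_subset_Icc_self
  filter_upwards [hfint, hmass, Metric.tendstoUniformlyOn_iff.1 hf _ (half_pos he),
    Metric.tendstoUniformlyOn_iff.1 hsum (ε / 3) (by positivity)] with i hi hVi hfi hsumi t ht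
  have hI₀ := happrox V₀ f₀ t ht hM hf₀int (by simp [he])
  have hIi := happrox (V i) (f i) t ht hVi hi hfi
  grw [dist_triangle4_right _ _ (stieltjesSum V₀ _ c N) (stieltjesSum (V i) _ c N), hI₀, hIi]
  linarith [hsumi t ht]

lemma tendstoLocallyUniformlyOn_comp_of_continuousOn {α X Y : Type*} [TopologicalSpace α]
    [UniformSpace X] [UniformSpace Y] {β : α → X → Y} {w : ι → α → X} {w₀ : α → X} {S : Set α}
    (hβ : ContinuousOn (Function.uncurry β) (S ×ˢ Set.univ)) (hw₀ : ContinuousOn w₀ S)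
    (hw : TendstoLocallyUniformlyOn w w₀ l S) :
    TendstoLocallyUniformlyOn (fun i a => β a (w i a)) (fun a => β a (w₀ a)) l S := by
  rw [tendstoLocallyUniformlyOn_iff_forall_tendsto] at hw ⊢
  intro a ha
  have hβa {u : ι × α → X} (hu : Tendsto u (l ×ˢ 𝓝[S] a) (𝓝 (w₀ a))) :
      Tendsto (fun p => β p.2 (u p)) (l ×ˢ 𝓝[S] a) (𝓝 (β a (w₀ a))) := by
    refine (hβ (a, w₀ a) ⟨ha, Set.mem_univ _⟩).tendsto.comp (f := fun p => (p.2, u p)) ?_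
    rw [nhdsWithin_prod_eq, nhdsWithin_univ]
    exact tendsto_snd.prodMk hu
  have hw₀a : Tendsto (fun p : ι × α => w₀ p.2) (l ×ˢ 𝓝[S] a) (𝓝 (w₀ a)) :=
    (hw₀ a ha).tendsto.comp tendsto_snd
  have hwa : Tendsto (fun p : ι × α => w p.1 p.2) (l ×ˢ 𝓝[S] a) (𝓝 (w₀ a)) :=
    hw₀a.congr_uniformity (hw a ha)
  exact ((hβa hw₀a).prodMk_nhds (hβa hwa)).mono_right (nhds_le_uniformity _)

end Convergence

theorem stieltjes_integral_tendstoLocallyUniformly_general {ι X E : Type*} {l : Filter ι} [l.NeBot]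
    [UniformSpace X] [NormedAddCommGroup E] [NormedSpace ℝ E] [CompleteSpace E]
    {β : ℝ → X → E} {s : ℝ} {w : ι → ℝ → X} {w₀ : ℝ → X}
    {v : ι → StieltjesFunction ℝ} {v₀ : StieltjesFunction ℝ}
    (hβ : ContinuousOn (Function.uncurry β) (Set.Ici s ×ˢ Set.univ))
    (hw : ∀ᶠ i in l, ContinuousOn (w i) (Set.Ici s))
    (hwconv : TendstoLocallyUniformlyOn w w₀ l (Set.Ici s))
    (hvconv : TendstoLocallyUniformlyOn (fun i => (v i : ℝ → ℝ)) v₀ l (Set.Ici s)) :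
    TendstoLocallyUniformlyOn (fun i t => ∫ r in Set.Ioc s t, β r (w i r) ∂(v i).measure)
      (fun t => ∫ r in Set.Ioc s t, β r (w₀ r) ∂v₀.measure) l (Set.Ici s) := by
  have hw₀ : ContinuousOn w₀ (Set.Ici s) := hwconv.continuousOn hw.frequently
  have hcomp {u : ℝ → X} (hu : ContinuousOn u (Set.Ici s)) :
      ContinuousOn (fun r => β r (u r)) (Set.Ici s) :=
    hβ.comp (continuousOn_id.prodMk hu) fun r hr => ⟨hr, Set.mem_univ _⟩
  have hconv := tendstoLocallyUniformlyOn_comp_of_continuousOn hβ hw₀ hwconv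
  refine tendstoLocallyUniformlyOn_of_forall_exists_nhds fun a ha => ?_
  have hIcc : Set.Icc s (a + 1) ⊆ Set.Ici s := Set.Icc_subset_Ici_self
  refine ⟨Set.Icc s (a + 1), ?_, tendstoUniformlyOn_setIntegral_Ioc ?_ ((hcomp hw₀).mono hIcc) ?_
    ?_ ?_⟩
  · exact inter_mem_nhdsWithin (Set.Ici s) (Iic_mem_nhds (lt_add_one a))
  · exact ha.out.trans (lt_add_one a).le
  · filter_upwards [hw] with i hi
    exact ((hcomp hi).mono hIcc).integrableOn_Icc.mono_set Set.Ioc_subset_Icc_self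
  · exact (tendstoLocallyUniformlyOn_iff_tendstoUniformlyOn_of_compact isCompact_Icc).1
      (hconv.mono hIcc)
  · exact (tendstoLocallyUniformlyOn_iff_tendstoUniformlyOn_of_compact isCompact_Icc).1
      (hvconv.mono hIcc)

/-- **Continuity of Stieltjes integrals under locally uniform convergence.**
Let `n ≥ 1`, let `β : [0, ∞) × ℝⁿ → ℝⁿ` be bounded and continuous, and let
`s ≥ 0`.  For `k = 0, 1, 2, …` let `wₖ : [0, ∞) → ℝⁿ` be continuous and
`vₖ : [0, ∞) → ℝ` be continuous and nondecreasing (extended to `ℝ`, so that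
`vₖ` is a Stieltjes function with Lebesgue–Stieltjes measure `λ_{vₖ}`), and
suppose `wₖ → w₀` and `vₖ → v₀` locally uniformly as `k → ∞`.  Then
`t ↦ ∫_{(s, t]} β(r, wₖ(r)) dλ_{vₖ}(r)` converges locally uniformly on
`[s, ∞)` to `t ↦ ∫_{(s, t]} β(r, w₀(r)) dλ_{v₀}(r)` as `k → ∞`. -/
theorem stieltjes_integral_tendstoLocallyUniformly
    (n : ℕ) (hn : 1 ≤ n)
    (β : ℝ → EuclideanSpace ℝ (Fin n) → EuclideanSpace ℝ (Fin n))
    (hβc : Continuous fun p : ℝ × EuclideanSpace ℝ (Fin n) => β p.1 p.2)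
    (C : ℝ) (hβb : ∀ t x, ‖β t x‖ ≤ C)
    (s : ℝ) (hs : 0 ≤ s)
    (w : ℕ → ℝ → EuclideanSpace ℝ (Fin n))
    (v : ℕ → StieltjesFunction ℝ)
    (hw : ∀ k, Continuous (w k))
    (hv : ∀ k, Continuous (v k))
    (hwconv : TendstoLocallyUniformlyOn (fun k => w k) (w 0) atTop (Set.Ici 0))
    (hvconv : TendstoLocallyUniformlyOn (fun k => ((v k : ℝ → ℝ))) ((v 0 : ℝ → ℝ))
      atTop (Set.Ici 0)) :
    TendstoLocallyUniformlyOn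
      (fun k t => ∫ r in Set.Ioc s t, β r (w k r) ∂((v k).measure))
      (fun t => ∫ r in Set.Ioc s t, β r (w 0 r) ∂((v 0).measure))
      atTop (Set.Ici s) := by
  have hsub : Set.Ici s ⊆ Set.Ici 0 := Set.Ici_subset_Ici.2 hs
  exact stieltjes_integral_tendstoLocallyUniformly_general hβc.continuousOn
    (.of_forall fun k => (hw k).continuousOn) (hwconv.mono hsub) (hvconv.mono hsub)
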